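/- arXiv:1410.5159 — 4 statements merged into one kernel-verified Lean document; each statement's English description precedes it below -/
import Mathlib

section
/- Let A be a Banach algebra over ℂ and let I be a closed two-sided ideal of A. Suppose I has a bounded Δ-weak approximate identity, i.e. there exist a directed set ι, a net (e_α)_{α∈ι} of elements of I, and a constant C > 0 with ‖e_α‖ ≤ C for all α, such that for every a ∈ I and every character φ ∈ Δ(A) one has φ(a e_α) → φ(a). Suppose moreover that the quotient Banach algebra A/I (with the quotient norm) has a bounded left approximate identity, i.e. a bounded net (g_δ) in A/I with ‖g_δ b − b‖ → 0 for every b ∈ A/I. Then A has a bounded Δ-weak approximate identity: there is a bounded net (u_β) in A such that φ(u_β) → 1 for every φ ∈ Δ(A). -/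
open Filter Metric

universe u v

open scoped Topology

/-!
Lift `(g_δ)` to a bounded net `(f_δ)` in `A` and combine it with `(e_α)` through the circle product
`u = f + e - f * e`, indexed by pairs `(α, δ)`. A character `φ` satisfies
`1 - φ u = (1 - φ f) * (1 - φ e)`, with both factors bounded, so it suffices that one of them tends
to `0`. If `φ` does not vanish on `I`, then `φ e → 1`, as one sees by cancelling `φ a` in
`φ (a * e) → φ a` for some `a ∈ I` with `φ a ≠ 0`. If `φ` vanishes on `I`, it factors through the
quotient, and `φ f = φ g → 1` by the same cancellation.
-/

instance isDirectedOrder_prod {α β : Type*} [LE α] [LE β] [IsDirectedOrder α] [IsDirectedOrder β] :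
    IsDirectedOrder (α × β) where
  directed p q :=
    have ⟨a, hpa, hqa⟩ := exists_ge_ge p.1 q.1
    have ⟨b, hpb, hqb⟩ := exists_ge_ge p.2 q.2
    ⟨(a, b), ⟨hpa, hpb⟩, ⟨hqa, hqb⟩⟩

/-- The circle product (quasi-multiplication) `x ∘ y = x + y - x * y` of a possibly non-unital ring,
with the sign for which formally `1 - x ∘ y = (1 - x) * (1 - y)`. It merges two approximate
identities into one. -/
def circleProd {A : Type*} [NonUnitalNonAssocRing A] (x y : A) : A :=
  x + y - x * y

theorem one_sub_map_circleProd {A R F : Type*} [NonUnitalNonAssocRing A] [Ring R] [FunLike F A R]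
    [AddMonoidHomClass F A R] {φ : F} (hmul : ∀ x y, φ (x * y) = φ x * φ y) (x y : A) :
    1 - φ (circleProd x y) = (1 - φ x) * (1 - φ y) := by
  rw [circleProd, map_sub, map_add, hmul]
  noncomm_ring

theorem norm_circleProd_le_of_le {A : Type*} [NonUnitalSeminormedRing A] {x y : A} {a b : ℝ}
    (hx : ‖x‖ ≤ a) (hy : ‖y‖ ≤ b) : ‖circleProd x y‖ ≤ a + b + a * b :=
  norm_sub_le_of_le (norm_add_le_of_le hx hy) (norm_mul_le_of_le hx hy)

section Functional

variable {𝕜 E ι : Type*} [NontriviallyNormedField 𝕜] [SeminormedAddCommGroup E] [NormedSpace 𝕜 E]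

theorem norm_map_le_opNorm_mul_infDist {S : Set E} (hS : S.Nonempty) {φ : E →L[𝕜] 𝕜}
    (hφS : ∀ s ∈ S, φ s = 0) (x : E) : ‖φ x‖ ≤ ‖φ‖ * infDist x S := by
  have : Nonempty S := hS.to_subtype
  rw [infDist_eq_iInf, Real.mul_iInf_of_nonneg (norm_nonneg φ)]
  refine le_ciInf fun s => ?_
  calc ‖φ x‖ = ‖φ (x - s)‖ := by rw [map_sub, hφS s s.2, sub_zero]
    _ ≤ ‖φ‖ * ‖x - s‖ := φ.le_opNorm _
    _ = ‖φ‖ * dist x s := by rw [dist_eq_norm]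

theorem isBoundedUnder_norm_one_sub_map (φ : E →L[𝕜] 𝕜) {l : Filter ι} {x : ι → E}
    (hx : IsBoundedUnder (· ≤ ·) l fun i => ‖x i‖) :
    IsBoundedUnder (· ≤ ·) l fun i => ‖1 - φ (x i)‖ := by
  obtain ⟨C, hC⟩ := hx.eventually_le
  refine isBoundedUnder_of_eventually_le (a := ‖(1 : 𝕜)‖ + ‖φ‖ * C) ?_
  filter_upwards [hC] with i hi
  exact norm_sub_le_of_le le_rfl (φ.le_opNorm_of_le hi)

end Functional

section Multiplicative

variable {𝕜 A ι κ : Type*} [NontriviallyNormedField 𝕜] [NonUnitalSeminormedRing A]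
  [NormedSpace 𝕜 A] {φ : A →L[𝕜] 𝕜} {l : Filter ι}

theorem tendsto_map_one_of_tendsto_map_mul_left (hmul : ∀ x y, φ (x * y) = φ x * φ y) {a : A}
    (ha : φ a ≠ 0) {x : ι → A} (hx : Tendsto (fun i => φ (a * x i)) l (𝓝 (φ a))) :
    Tendsto (fun i => φ (x i)) l (𝓝 1) := by
  rw [← tendsto_const_smul_iff₀ ha]
  simpa only [smul_eq_mul, mul_one, hmul] using hx

theorem tendsto_map_one_of_tendsto_map_mul_right (hmul : ∀ x y, φ (x * y) = φ x * φ y) {b : A}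
    (hb : φ b ≠ 0) {x : ι → A} (hx : Tendsto (fun i => φ (x i * b)) l (𝓝 (φ b))) :
    Tendsto (fun i => φ (x i)) l (𝓝 1) := by
  refine tendsto_map_one_of_tendsto_map_mul_left hmul hb (hx.congr fun i => ?_)
  rw [hmul, hmul, mul_comm]

theorem tendsto_map_one_of_tendsto_infDist {S : Set A} (hS : S.Nonempty)
    (hφS : ∀ s ∈ S, φ s = 0) (hmul : ∀ x y, φ (x * y) = φ x * φ y) {b : A} (hb : φ b ≠ 0)
    {x : ι → A} (hx : Tendsto (fun i => infDist (x i * b - b) S) l (𝓝 0)) :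
    Tendsto (fun i => φ (x i)) l (𝓝 1) := by
  refine tendsto_map_one_of_tendsto_map_mul_right hmul hb (tendsto_sub_nhds_zero_iff.1 ?_)
  simp only [← map_sub]
  refine squeeze_zero_norm (fun i => norm_map_le_opNorm_mul_infDist hS hφS _) ?_
  simpa only [mul_zero] using hx.const_mul ‖φ‖

theorem tendsto_map_circleProd_one_of_left (hmul : ∀ x y, φ (x * y) = φ x * φ y) {x y : ι → A}
    (hx : Tendsto (fun i => φ (x i)) l (𝓝 1)) (hy : IsBoundedUnder (· ≤ ·) l fun i => ‖y i‖) :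
    Tendsto (fun i => φ (circleProd (x i) (y i))) l (𝓝 1) := by
  rw [← tendsto_const_sub_iff 1, sub_self] at hx ⊢
  simp only [one_sub_map_circleProd hmul]
  exact hx.zero_mul_isBoundedUnder_le (isBoundedUnder_norm_one_sub_map φ hy)

theorem tendsto_map_circleProd_one_of_right (hmul : ∀ x y, φ (x * y) = φ x * φ y) {x y : ι → A}
    (hx : IsBoundedUnder (· ≤ ·) l fun i => ‖x i‖) (hy : Tendsto (fun i => φ (y i)) l (𝓝 1)) :
    Tendsto (fun i => φ (circleProd (x i) (y i))) l (𝓝 1) := by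
  rw [← tendsto_const_sub_iff 1, sub_self] at hy ⊢
  simp only [one_sub_map_circleProd hmul]
  exact isBoundedUnder_le_mul_tendsto_zero (isBoundedUnder_norm_one_sub_map φ hx) hy

theorem hasBoundedDeltaWeakApproxIdentity_of_ideal_general {S : Set A} (hS : S.Nonempty)
    {e : ι → A} {C : ℝ} (he_bdd : ∀ α, ‖e α‖ ≤ C)
    (he_wai : ∀ a ∈ S, ∀ φ : A →L[𝕜] 𝕜, φ ≠ 0 → (∀ x y, φ (x * y) = φ x * φ y) →
      Tendsto (fun α => φ (a * e α)) l (𝓝 (φ a)))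
    {m : Filter κ} {g : κ → A} {D : ℝ} (hg_bdd : ∀ δ, infDist (g δ) S < D)
    (hg_lai : ∀ b, Tendsto (fun δ => infDist (g δ * b - b) S) m (𝓝 0)) :
    ∃ u : ι × κ → A, (∀ β, ‖u β‖ ≤ D + C + D * C) ∧
      ∀ φ : A →L[𝕜] 𝕜, φ ≠ 0 → (∀ x y, φ (x * y) = φ x * φ y) →
        Tendsto (fun β => φ (u β)) (l ×ˢ m) (𝓝 1) := by
  choose s hsS hs_dist using fun δ => (infDist_lt_iff hS).1 (hg_bdd δ)
  have hf_bdd (δ : κ) : ‖g δ - s δ‖ ≤ D := dist_eq_norm (g δ) (s δ) ▸ (hs_dist δ).le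
  refine ⟨fun β => circleProd (g β.2 - s β.2) (e β.1),
    fun β => norm_circleProd_le_of_le (hf_bdd β.2) (he_bdd β.1), fun φ hφ hmul => ?_⟩
  by_cases hφS : ∀ a ∈ S, φ a = 0
  · obtain ⟨b, hb⟩ : ∃ b, φ b ≠ 0 := DFunLike.ne_iff.1 hφ
    have hg : Tendsto (fun δ => φ (g δ)) m (𝓝 1) :=
      tendsto_map_one_of_tendsto_infDist hS hφS hmul hb (hg_lai b)
    have hf : Tendsto (fun δ => φ (g δ - s δ)) m (𝓝 1) :=
      hg.congr fun δ => by rw [map_sub, hφS _ (hsS δ), sub_zero]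
    exact tendsto_map_circleProd_one_of_left hmul (hf.comp tendsto_snd)
      (isBoundedUnder_of ⟨C, fun β => he_bdd β.1⟩)
  · obtain ⟨a, haS, ha⟩ : ∃ a ∈ S, φ a ≠ 0 := by simpa only [not_forall, exists_prop] using hφS
    have he : Tendsto (fun α => φ (e α)) l (𝓝 1) :=
      tendsto_map_one_of_tendsto_map_mul_left hmul ha (he_wai a haS φ hφ hmul)
    exact tendsto_map_circleProd_one_of_right hmul (isBoundedUnder_of ⟨D, fun β => hf_bdd β.2⟩)
      (he.comp tendsto_fst)

end Multiplicative

/-- Let `A` be a Banach algebra over `ℂ` and `I` a closed two-sided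
ideal of `A`.  Suppose `I` has a bounded Δ-weak approximate identity: a net
`(e_α)` of elements of `I` with `‖e_α‖ ≤ C` such that `φ (a * e_α) → φ a` for
every `a ∈ I` and every character `φ` of `A` (characters being the nonzero
continuous multiplicative linear functionals `A → ℂ`).  Suppose moreover that the
quotient Banach algebra `A/I`, with the quotient norm, has a bounded left
approximate identity `(g_δ)`.  Here elements of `A/I` are encoded by
representatives in `A`, and the quotient norm of the coset `x + I` is
`Metric.infDist x I = inf { ‖x + y‖ : y ∈ I }`; thus the bounded left approximate
identity is a net `(g_δ)` in `A` whose cosets are bounded in the quotient norm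
(`infDist (g_δ) I ≤ D`) and satisfy `‖(g_δ + I)(b + I) - (b + I)‖_{A/I} =
infDist (g_δ * b - b) I → 0` for every coset `b + I`, `b ∈ A`.
Then `A` has a bounded Δ-weak approximate identity: a bounded net `(u_β)`
(indexed by some directed set `χ`) with `φ (u_β) → 1` for every character `φ`. -/
theorem hasBoundedDeltaWeakApproxIdentity_of_ideal
    {A : Type u} [NonUnitalNormedRing A] [NormedSpace ℂ A]
    [IsScalarTower ℂ A A] [SMulCommClass ℂ A A] [CompleteSpace A]
    (I : TwoSidedIdeal A) (hI : IsClosed (I : Set A))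
    -- the bounded Δ-weak approximate identity of `I`
    {ι : Type u} [Preorder ι] [IsDirected ι (· ≤ ·)] [Nonempty ι]
    (e : ι → A) (he_mem : ∀ α, e α ∈ I)
    (C : ℝ) (hC : 0 < C) (he_bdd : ∀ α, ‖e α‖ ≤ C)
    (he_wai : ∀ a ∈ I, ∀ φ : A →L[ℂ] ℂ, φ ≠ 0 →
      (∀ x y : A, φ (x * y) = φ x * φ y) →
        Tendsto (fun α => φ (a * e α)) atTop (nhds (φ a)))
    -- the bounded left approximate identity of the quotient `A/I`
    {κ : Type v} [Preorder κ] [IsDirected κ (· ≤ ·)] [Nonempty κ]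
    (g : κ → A) (D : ℝ) (hD : 0 < D)
    (hg_bdd : ∀ δ, infDist (g δ) (I : Set A) ≤ D)
    (hg_lai : ∀ b : A,
      Tendsto (fun δ => infDist (g δ * b - b) (I : Set A)) atTop (nhds 0)) :
    -- conclusion: `A` has a bounded Δ-weak approximate identity
    ∃ (χ : Type (max u v)) (p : Preorder χ), IsDirected χ p.le ∧ Nonempty χ ∧
      ∃ (u : χ → A) (K : ℝ), 0 < K ∧ (∀ β, ‖u β‖ ≤ K) ∧
        ∀ φ : A →L[ℂ] ℂ, φ ≠ 0 → (∀ x y : A, φ (x * y) = φ x * φ y) →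
          Tendsto (fun β => φ (u β)) (@atTop χ p) (nhds 1) := by
  obtain ⟨u, hu_bdd, hu⟩ := hasBoundedDeltaWeakApproxIdentity_of_ideal_general ⟨0, I.zero_mem⟩
    he_bdd he_wai (fun δ => (hg_bdd δ).trans_lt (lt_add_one D)) hg_lai
  exact ⟨ι × κ, inferInstance, inferInstance, inferInstance, u, _, by positivity, hu_bdd,
    prod_atTop_atTop_eq (α := ι) (β := κ) ▸ hu⟩
end

section
/- Let E be a normed vector space over ℂ, let ι be a directed set, let (e_i)_{i∈ι} be a net in E with ‖e_i‖ ≤ M for all i (for some M > 0), and let S be a set of continuous linear functionals on E such that f(e_i) → 1 for every f ∈ S. Then there exists an element Φ of the bidual E** (the continuous dual of the strong dual of E) with ‖Φ‖ ≤ M and Φ(f) = 1 for every f ∈ S. -/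
open Filter
open scoped Topology

theorem eq_of_mapClusterPt_of_tendsto {X ι : Type*} [TopologicalSpace X] [T2Space X]
    {l : Filter ι} {u : ι → X} {x y : X} (hx : MapClusterPt x l u) (hy : Tendsto u l (𝓝 y)) :
    x = y :=
  eq_of_nhds_neBot (hx.neBot.mono (inf_le_inf_left (𝓝 x) hy))

theorem weakDual_apply_eq_of_mapClusterPt_of_tendsto {𝕜 F ι : Type*} [CommSemiring 𝕜]
    [TopologicalSpace 𝕜] [ContinuousAdd 𝕜] [ContinuousConstSMul 𝕜 𝕜] [T2Space 𝕜]
    [AddCommMonoid F] [Module 𝕜 F] [TopologicalSpace F] {l : Filter ι} {u : ι → WeakDual 𝕜 F}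
    {φ : WeakDual 𝕜 F} (hφ : MapClusterPt φ l u) {x : F} {c : 𝕜}
    (hx : Tendsto (fun i => u i x) l (𝓝 c)) : φ x = c := by
  have hφx : MapClusterPt (φ x) l (fun i => u i x) :=
    hφ.tendsto_comp ((WeakDual.eval_continuous x).tendsto φ)
  exact eq_of_mapClusterPt_of_tendsto hφx hx

section BanachAlaoglu

variable {𝕜 ι : Type*} [NontriviallyNormedField 𝕜] [ProperSpace 𝕜] {l : Filter ι}

theorem exists_norm_le_mapClusterPt_toWeakDual {F : Type*} [SeminormedAddCommGroup F]
    [NormedSpace 𝕜 F] {u : ι → StrongDual 𝕜 F} {M : ℝ} (hu : ∃ᶠ i in l, ‖u i‖ ≤ M) :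
    ∃ φ : StrongDual 𝕜 F, ‖φ‖ ≤ M ∧
      MapClusterPt (StrongDual.toWeakDual φ) l (fun i => StrongDual.toWeakDual (u i)) := by
  have hball : ∃ᶠ i in l, StrongDual.toWeakDual (u i) ∈
      WeakDual.toStrongDual ⁻¹' Metric.closedBall (0 : StrongDual 𝕜 F) M :=
    hu.mono fun i hi => mem_closedBall_zero_iff.mpr hi
  obtain ⟨φ, hφ_ball, hφ⟩ :=
    (WeakDual.isCompact_closedBall 0 M).exists_mapClusterPt_of_frequently hball
  exact ⟨WeakDual.toStrongDual φ, mem_closedBall_zero_iff.mp hφ_ball, hφ⟩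

theorem exists_bidual_cluster_point_general {E : Type*} [SeminormedAddCommGroup E]
    [NormedSpace 𝕜 E] {e : ι → E} {M : ℝ} (he : ∃ᶠ i in l, ‖e i‖ ≤ M) :
    ∃ Φ : StrongDual 𝕜 (StrongDual 𝕜 E), ‖Φ‖ ≤ M ∧
      ∀ (f : StrongDual 𝕜 E) (c : 𝕜), Tendsto (fun i => f (e i)) l (𝓝 c) → Φ f = c := by
  have he_bidual : ∃ᶠ i in l, ‖NormedSpace.inclusionInDoubleDual 𝕜 E (e i)‖ ≤ M :=
    he.mono fun i hi => (NormedSpace.double_dual_bound 𝕜 E (e i)).trans hi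
  obtain ⟨Φ, hΦ_norm, hΦ⟩ := exists_norm_le_mapClusterPt_toWeakDual he_bidual
  exact ⟨Φ, hΦ_norm, fun f c hf => weakDual_apply_eq_of_mapClusterPt_of_tendsto hΦ hf⟩

end BanachAlaoglu

/-- If `(e_i)` is a net in a normed `ℂ`-vector space `E` with
`‖e_i‖ ≤ M` and `S` is a set of continuous linear functionals on `E` with
`f (e_i) → 1` for every `f ∈ S`, then there is an element `Φ` of the bidual
`E**` with `‖Φ‖ ≤ M` and `Φ f = 1` for all `f ∈ S`. -/
theorem exists_bidual_cluster_point
    {E : Type*} [NormedAddCommGroup E] [NormedSpace ℂ E]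
    {ι : Type*} [Preorder ι] [IsDirected ι (· ≤ ·)] [Nonempty ι]
    (e : ι → E) (M : ℝ) (hM : 0 < M) (he_bdd : ∀ i, ‖e i‖ ≤ M)
    (S : Set (StrongDual ℂ E))
    (hS : ∀ f ∈ S, Tendsto (fun i => f (e i)) atTop (nhds 1)) :
    ∃ Φ : StrongDual ℂ (StrongDual ℂ E),
      ‖Φ‖ ≤ M ∧ ∀ f ∈ S, Φ f = 1 := by
  obtain ⟨Φ, hΦ_norm, hΦ⟩ :=
    exists_bidual_cluster_point_general (𝕜 := ℂ) (l := atTop) (.of_forall he_bdd)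
  exact ⟨Φ, hΦ_norm, fun f hf => hΦ f 1 (hS f hf)⟩
end

section
/- Let A be a Banach algebra over ℂ and let φ₀ ∈ Δ(A) be a character of A. Suppose the closed ideal ker φ₀ has a bounded Δ-weak approximate identity, i.e. a bounded net (e_α) of elements of ker φ₀ such that ψ(a e_α) → ψ(a) for every a ∈ ker φ₀ and every ψ ∈ Δ(A). Then A has a bounded Δ-weak approximate identity: there is a bounded net (u_β) in A such that ψ(u_β) → 1 for every ψ ∈ Δ(A). -/
open Filter

universe u

/-!
Fix `b` with `φ₀ b = 1` and put `u = b + e - b * e`, so that `1 - ψ u = (1 - ψ b) (1 - ψ e)` for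
every character `ψ`. If `ψ` does not vanish on `ker φ₀`, then `ψ e → 1`. Otherwise `ψ` kills
`c - c * b ∈ ker φ₀` for every `c`, which forces `ψ b = 1`. Either way `ψ u → 1`.
-/

open Bornology Topology WeakDual

section Multiplicative

variable {ι A 𝕜 F : Type*} [FunLike F A 𝕜]

lemma tendsto_map_nhds_one_of_tendsto_map_mul [Mul A] [GroupWithZero 𝕜] [TopologicalSpace 𝕜]
    [ContinuousMul 𝕜] [MulHomClass F A 𝕜] {l : Filter ι} {e : ι → A} {ψ : F} {a : A}
    (ha : ψ a ≠ 0) (h : Tendsto (fun i ↦ ψ (a * e i)) l (𝓝 (ψ a))) :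
    Tendsto (fun i ↦ ψ (e i)) l (𝓝 1) := by
  simpa [ha] using h.const_mul (ψ a)⁻¹

variable [NonUnitalNonAssocRing A] [Ring 𝕜] [NonUnitalRingHomClass F A 𝕜]

lemma map_add_sub_mul_eq_one_sub (ψ : F) (b x : A) :
    ψ (b + x - b * x) = 1 - (1 - ψ b) * (1 - ψ x) := by
  simp only [map_sub, map_add, map_mul]
  noncomm_ring

lemma tendsto_map_add_sub_mul_nhds_one [TopologicalSpace 𝕜] [IsTopologicalRing 𝕜] {l : Filter ι}
    {e : ι → A} {ψ : F} (b : A) (h : Tendsto (fun i ↦ ψ (e i)) l (𝓝 1)) :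
    Tendsto (fun i ↦ ψ (b + e i - b * e i)) l (𝓝 1) := by
  simpa [map_add_sub_mul_eq_one_sub] using ((h.const_sub 1).const_mul (1 - ψ b)).const_sub 1

lemma map_eq_one_of_ker_le [IsLeftCancelMulZero 𝕜] {S G : Type*} [NonAssocRing S] [FunLike G A S]
    [NonUnitalRingHomClass G A S] {φ : G} {ψ : F} (hker : ∀ a, φ a = 0 → ψ a = 0)
    {b c : A} (hb : φ b = 1) (hc : ψ c ≠ 0) : ψ b = 1 := by
  have hψ_sub : ψ (c - c * b) = 0 := hker _ (by simp [hb])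
  have hψ_mul : ψ c * 1 = ψ c * ψ b := by simpa [sub_eq_zero] using hψ_sub
  exact (mul_left_cancel₀ hc hψ_mul).symm

end Multiplicative

section Bounded

variable {ι A : Type*} [NonUnitalSeminormedRing A]

lemma norm_add_sub_mul_le (b x : A) : ‖b + x - b * x‖ ≤ ‖b‖ + ‖x‖ + ‖b‖ * ‖x‖ :=
  (norm_sub_le _ _).trans (add_le_add (norm_add_le b x) (norm_mul_le b x))

lemma isBounded_range_add_sub_mul {e : ι → A} (he : IsBounded (Set.range e)) (b : A) :
    IsBounded (Set.range fun i ↦ b + e i - b * e i) := by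
  obtain ⟨C, hC⟩ := he.exists_norm_le
  refine isBounded_iff_forall_norm_le.2 ⟨‖b‖ + C + ‖b‖ * C, Set.forall_mem_range.2 fun i ↦ ?_⟩
  have hei : ‖e i‖ ≤ C := hC _ ⟨i, rfl⟩
  exact (norm_add_sub_mul_le b (e i)).trans (by gcongr)

end Bounded

section Character

variable {A 𝕜 : Type*} [TopologicalSpace 𝕜] [NonUnitalNonAssocSemiring A] [TopologicalSpace A]

lemma exists_character_apply_ne_zero [CommSemiring 𝕜] [ContinuousAdd 𝕜]
    [ContinuousConstSMul 𝕜 𝕜] [Module 𝕜 A] (φ : characterSpace 𝕜 A) : ∃ a : A, φ a ≠ 0 := by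
  by_contra! h
  exact φ.2.1 (ContinuousLinearMap.ext h)

lemma exists_character_apply_eq_one [Semifield 𝕜] [ContinuousAdd 𝕜]
    [ContinuousConstSMul 𝕜 𝕜] [Module 𝕜 A] (φ : characterSpace 𝕜 A) : ∃ a : A, φ a = 1 := by
  obtain ⟨a, ha⟩ := exists_character_apply_ne_zero φ
  exact ⟨(φ a)⁻¹ • a, by simp [ha]⟩

end Character

theorem hasBoundedDeltaWeakApproxIdentity_of_ker_char_general
    {A 𝕜 ι : Type*} [Field 𝕜] [TopologicalSpace 𝕜] [IsTopologicalRing 𝕜]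
    [NonUnitalSeminormedRing A] [Module 𝕜 A] {l : Filter ι}
    (φ₀ : characterSpace 𝕜 A) {e : ι → A} (he_bdd : IsBounded (Set.range e))
    (he_wai : ∀ a, φ₀ a = 0 → ∀ ψ : characterSpace 𝕜 A,
      Tendsto (fun i ↦ ψ (a * e i)) l (𝓝 (ψ a))) :
    ∃ u : ι → A, IsBounded (Set.range u) ∧
      ∀ ψ : characterSpace 𝕜 A, Tendsto (fun i ↦ ψ (u i)) l (𝓝 1) := by
  obtain ⟨b, hb⟩ := exists_character_apply_eq_one φ₀
  refine ⟨fun i ↦ b + e i - b * e i, isBounded_range_add_sub_mul he_bdd b, fun ψ ↦ ?_⟩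
  by_cases hker : ∀ a, φ₀ a = 0 → ψ a = 0
  · obtain ⟨c, hc⟩ := exists_character_apply_ne_zero ψ
    have hψb : ψ b = 1 := map_eq_one_of_ker_le hker hb hc
    simpa [map_add_sub_mul_eq_one_sub, hψb] using tendsto_const_nhds
  · push Not at hker
    obtain ⟨a, hφ₀a, hψa⟩ := hker
    exact tendsto_map_add_sub_mul_nhds_one b <|
      tendsto_map_nhds_one_of_tendsto_map_mul hψa (he_wai a hφ₀a ψ)

/-- Let `A` be a Banach algebra over `ℂ` and `φ₀` a character of `A`.
If the closed ideal `ker φ₀` has a bounded Δ-weak approximate identity — a bounded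
net `(e_α)` of elements of `ker φ₀` with `ψ (a * e_α) → ψ a` for every `a ∈ ker φ₀`
and every character `ψ` of `A` — then `A` has a bounded Δ-weak approximate identity:
a bounded net `(u_β)` (indexed by some directed set `κ`) with `ψ (u_β) → 1` for
every character `ψ` of `A`. Characters are nonzero continuous multiplicative
linear functionals. -/
theorem hasBoundedDeltaWeakApproxIdentity_of_ker_char
    {A : Type u} [NonUnitalNormedRing A] [NormedSpace ℂ A]
    [IsScalarTower ℂ A A] [SMulCommClass ℂ A A] [CompleteSpace A]
    {ι : Type u} [Preorder ι] [IsDirected ι (· ≤ ·)] [Nonempty ι]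
    (φ₀ : A →L[ℂ] ℂ) (hφ₀ : φ₀ ≠ 0) (hφ₀mul : ∀ x y : A, φ₀ (x * y) = φ₀ x * φ₀ y)
    (e : ι → A) (he_mem : ∀ α, φ₀ (e α) = 0)
    (C : ℝ) (hC : 0 < C) (he_bdd : ∀ α, ‖e α‖ ≤ C)
    (he_wai : ∀ a : A, φ₀ a = 0 →
      ∀ ψ : A →L[ℂ] ℂ, ψ ≠ 0 → (∀ x y : A, ψ (x * y) = ψ x * ψ y) →
        Tendsto (fun α => ψ (a * e α)) atTop (nhds (ψ a))) :
    ∃ (κ : Type u) (p : Preorder κ), IsDirected κ p.le ∧ Nonempty κ ∧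
      ∃ (u : κ → A) (D : ℝ), 0 < D ∧ (∀ β, ‖u β‖ ≤ D) ∧
        ∀ ψ : A →L[ℂ] ℂ, ψ ≠ 0 → (∀ x y : A, ψ (x * y) = ψ x * ψ y) →
          Tendsto (fun β => ψ (u β)) (@atTop κ p) (nhds 1) := by
  obtain ⟨u, hu_bdd, hu⟩ := hasBoundedDeltaWeakApproxIdentity_of_ker_char_general (l := atTop)
    (⟨φ₀, hφ₀, hφ₀mul⟩ : characterSpace ℂ A)
    (isBounded_iff_forall_norm_le.2 ⟨C, Set.forall_mem_range.2 he_bdd⟩)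
    fun a ha ψ ↦ he_wai a ha ψ.1 ψ.2.1 ψ.2.2
  obtain ⟨D, hD, hu_le⟩ := hu_bdd.exists_pos_norm_le
  exact ⟨ι, inferInstance, inferInstance, inferInstance, u, D, hD, Set.forall_mem_range.1 hu_le,
    fun ψ hψ hψmul ↦ hu ⟨ψ, hψ, hψmul⟩⟩
end

section
/- Let X be a locally compact Hausdorff topological space, let t ∈ X, let M ≥ 1 be a real number, and let w : X → ℝ be a function with 1 ≤ w(x) ≤ M for all x ∈ X. Then there exist a directed set ι and a net (f_α)_{α∈ι} of continuous compactly supported functions f_α : X → ℝ with 0 ≤ f_α(x) ≤ 1 for all x ∈ X and f_α(t) = 1 for all α, such that for every continuous g : X → ℂ for which the function x ↦ ‖g(x)‖ · w(x) vanishes at infinity (i.e. for every ε > 0 there is a compact set K ⊆ X with ‖g(x)‖ · w(x) < ε for all x ∉ K), the net of real numbers (⨆ x ∈ X, ‖g(x) − g(t)‖ · f_α(x) · w(x))_α tends to 0. -/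
open Filter

universe u

/-!
Index Urysohn bump functions at `t` by the open neighbourhoods of `t`, ordered by reverse
inclusion: their supports shrink to `t`. The function `x ↦ ‖g x - g t‖ * w x` tends to `0` at `t`
as soon as `w` is bounded near `t`, so its product with the bump functions tends to `0` uniformly,
and hence so does the supremum.
-/

open Topology TopologicalSpace Function Set

theorem abs_iSup_le_of_forall_abs_le {ι : Sort*} {u : ι → ℝ} {a : ℝ} (ha : 0 ≤ a)
    (hu : ∀ i, |u i| ≤ a) : |⨆ i, u i| ≤ a := by
  rcases isEmpty_or_nonempty ι with _ | ⟨⟨i⟩⟩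
  · rwa [Real.iSup_of_isEmpty, abs_zero]
  · have bddAbove_range : BddAbove (range u) :=
      ⟨a, forall_mem_range.2 fun j => (abs_le.1 (hu j)).2⟩
    exact abs_le.2 ⟨(abs_le.1 (hu i)).1.trans (le_ciSup bddAbove_range i),
      Real.iSup_le (fun j => (abs_le.1 (hu j)).2) ha⟩

theorem tendsto_iSup_zero_of_tendstoUniformly {ι X : Type*} {l : Filter ι} {F : ι → X → ℝ}
    (hF : TendstoUniformly F 0 l) : Tendsto (fun α => ⨆ x, F α x) l (𝓝 0) := by
  rw [Metric.tendsto_nhds]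
  intro ε hε
  filter_upwards [Metric.tendstoUniformly_iff.1 hF (ε / 2) (half_pos hε)] with α hα
  have abs_le_half : ∀ x, |F α x| ≤ ε / 2 := fun x => by
    simpa only [Pi.zero_apply, dist_zero_left, Real.norm_eq_abs] using (hα x).le
  rw [dist_zero_right, Real.norm_eq_abs]
  exact (abs_iSup_le_of_forall_abs_le (half_pos hε).le abs_le_half).trans_lt (half_lt_self hε)

theorem tendstoUniformly_mul_zero_of_tendsto_support_smallSets {ι X R : Type*}
    [NonUnitalSeminormedRing R] {l : Filter ι} {k : Filter X} {h : X → R} {f : ι → X → R} {C : ℝ}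
    (hh : Tendsto h k (𝓝 0)) (hfC : ∀ α x, ‖f α x‖ ≤ C)
    (hf : Tendsto (fun α => support (f α)) l k.smallSets) :
    TendstoUniformly (fun α x => h x * f α x) 0 l := by
  rw [Metric.tendstoUniformly_iff]
  intro ε hε
  have norm_mul_lt : ∀ᶠ x in k, ‖h x‖ * C < ε := by
    have : Tendsto (fun x => ‖h x‖ * C) k (𝓝 0) := by
      simpa only [norm_zero, zero_mul] using hh.norm.mul_const C
    exact this.eventually_lt_const hε
  filter_upwards [tendsto_smallSets_iff.1 hf _ norm_mul_lt] with α hα x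
  rw [Pi.zero_apply, dist_zero_left]
  by_cases hx : f α x = 0
  · rwa [hx, mul_zero, norm_zero]
  · calc ‖h x * f α x‖ ≤ ‖h x‖ * ‖f α x‖ := norm_mul_le _ _
      _ ≤ ‖h x‖ * C := by gcongr; exact hfC α x
      _ < ε := hα hx

section

variable {X : Type u} [TopologicalSpace X]

theorem tendsto_norm_sub_mul_zero_of_isBoundedUnder {E : Type*} [SeminormedAddCommGroup E] {t : X}
    {g : X → E} {w : X → ℝ} (hg : ContinuousAt g t)
    (hw : IsBoundedUnder (· ≤ ·) (𝓝 t) fun x => |w x|) :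
    Tendsto (fun x => ‖g x - g t‖ * w x) (𝓝 t) (𝓝 0) :=
  (tendsto_iff_norm_sub_tendsto_zero.1 hg).zero_mul_isBoundedUnder_le hw

theorem tendsto_coe_openNhdsOf_smallSets (t : X) :
    Tendsto (fun U : (OpenNhdsOf t)ᵒᵈ => (↑(OrderDual.ofDual U) : Set X)) atTop
      (𝓝 t).smallSets := by
  refine tendsto_smallSets_iff.2 fun s hs => ?_
  obtain ⟨U, -, hUs⟩ := OpenNhdsOf.basis_nhds.mem_iff.1 hs
  filter_upwards [Ici_mem_atTop (OrderDual.toDual U)] with V hV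
  exact (SetLike.coe_subset_coe.2 hV).trans hUs

variable [WeaklyLocallyCompactSpace X] [R1Space X]

theorem exists_continuousMap_eq_one_support_subset {t : X} (U : OpenNhdsOf t) :
    ∃ f : C(X, ℝ), HasCompactSupport f ∧ (∀ x, 0 ≤ f x ∧ f x ≤ 1) ∧ f t = 1 ∧
      support f ⊆ U := by
  obtain ⟨f, hf_one, hf_zero, hf_compact, hf_mem⟩ :=
    exists_continuous_one_zero_of_isCompact (isCompact_singleton (x := t)) U.isOpen.isClosed_compl
      (disjoint_compl_right_iff_subset.2 (singleton_subset_iff.2 U.mem))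
  exact ⟨f, hf_compact, hf_mem, hf_one rfl,
    support_subset_iff'.2 fun x hx => hf_zero hx⟩

theorem exists_net_deltaWeak_at_eval_general (t : X) :
    ∃ (ι : Type u) (p : Preorder ι), IsDirected ι p.le ∧ Nonempty ι ∧
      ∃ f : ι → X → ℝ,
        (∀ α, Continuous (f α) ∧ HasCompactSupport (f α) ∧
          (∀ x, 0 ≤ f α x ∧ f α x ≤ 1) ∧ f α t = 1) ∧
        ∀ (E : Type*) [SeminormedAddCommGroup E] (w : X → ℝ) (g : X → E),
          IsBoundedUnder (· ≤ ·) (𝓝 t) (fun x => |w x|) → ContinuousAt g t →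
          Tendsto (fun α => ⨆ x, ‖g x - g t‖ * f α x * w x) (@atTop ι p) (𝓝 0) := by
  choose f hf_compact hf_mem hf_one hf_support using
    exists_continuousMap_eq_one_support_subset (t := t)
  have support_tendsto : Tendsto (fun U : (OpenNhdsOf t)ᵒᵈ => support (f (OrderDual.ofDual U)))
      atTop (𝓝 t).smallSets :=
    (tendsto_coe_openNhdsOf_smallSets t).smallSets_mono (.of_forall fun U => hf_support _)
  refine ⟨(OpenNhdsOf t)ᵒᵈ, inferInstance, inferInstance, inferInstance,
    fun U => f (OrderDual.ofDual U),
    fun U => ⟨(f _).continuous, hf_compact _, hf_mem _, hf_one _⟩, fun E _ w g hw hg => ?_⟩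
  have norm_le_one : ∀ (U : (OpenNhdsOf t)ᵒᵈ) x, ‖f (OrderDual.ofDual U) x‖ ≤ 1 := fun U x =>
    (Real.norm_of_nonneg (hf_mem _ x).1).trans_le (hf_mem _ x).2
  simp only [mul_right_comm _ _ (w _)]
  exact tendsto_iSup_zero_of_tendstoUniformly <|
    tendstoUniformly_mul_zero_of_tendsto_support_smallSets
      (tendsto_norm_sub_mul_zero_of_isBoundedUnder hg hw) norm_le_one support_tendsto

end

/-- Let `X` be a locally compact Hausdorff space, `t ∈ X`, `M ≥ 1`,
and `w : X → ℝ` a weight with `1 ≤ w x ≤ M` for all `x`.  Then there is a net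
`(f_α)` (indexed by some directed set `ι`) of continuous compactly supported
functions `f_α : X → ℝ` with `0 ≤ f_α ≤ 1` and `f_α t = 1`, such that for every
continuous `g : X → ℂ` for which `x ↦ ‖g x‖ · w x` vanishes at infinity, the net
`(⨆ x, ‖g x − g t‖ · f_α x · w x)_α` tends to `0`.  (This says the `f_α` form a
Δ-weak approximate identity at the evaluation character at `t` for the weighted
algebra `C₀^w(X)` with the weighted sup norm.) -/
theorem exists_net_deltaWeak_at_eval
    {X : Type u} [TopologicalSpace X] [LocallyCompactSpace X] [T2Space X]
    (t : X) (M : ℝ) (hM : 1 ≤ M) (w : X → ℝ)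
    (hw : ∀ x, 1 ≤ w x ∧ w x ≤ M) :
    ∃ (ι : Type u) (p : Preorder ι), IsDirected ι p.le ∧ Nonempty ι ∧
      ∃ f : ι → X → ℝ,
        (∀ α, Continuous (f α) ∧ HasCompactSupport (f α) ∧
          (∀ x, 0 ≤ f α x ∧ f α x ≤ 1) ∧ f α t = 1) ∧
        ∀ g : X → ℂ, Continuous g →
          (∀ ε > (0 : ℝ), ∃ K : Set X, IsCompact K ∧ ∀ x ∉ K, ‖g x‖ * w x < ε) →
          Tendsto (fun α => ⨆ x, ‖g x - g t‖ * f α x * w x)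
            (@atTop ι p) (nhds 0) := by
  obtain ⟨ι, p, hdir, hne, f, hf, hlim⟩ := exists_net_deltaWeak_at_eval_general t
  have abs_le_M : ∀ x, |w x| ≤ M := fun x =>
    (abs_of_nonneg (zero_le_one.trans (hw x).1)).trans_le (hw x).2
  exact ⟨ι, p, hdir, hne, f, hf, fun g hg _ =>
    hlim ℂ w g (isBoundedUnder_of ⟨M, abs_le_M⟩) hg.continuousAt⟩
end
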